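/- (Lemma 1) Fix vehicle length l > 0, uncertainty parameter σₒ > 0 and speed v > 0, and let p̂ ∈ (0,1) be a maximum allowable collision probability. Then there exists a unique headway η̂ > 0 such that p(v,η̂) = p̂, and for every headway η > 0 one has p(v,η) ≤ p̂ if and only if η ≥ η̂. -/

import Mathlib

open MeasureTheory Real Filter Set

/-- The standard Gaussian probability density function. -/
noncomputable def stdGaussianPDF (x : ℝ) : ℝ :=
  (Real.sqrt (2 * Real.pi))⁻¹ * Real.exp (-x ^ 2 / 2)

/-- The standard Gaussian cumulative distribution function Φ. -/
noncomputable def stdGaussianCDF (x : ℝ) : ℝ :=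
  ∫ t in Set.Iic x, stdGaussianPDF t

/-- The per-time-step collision probability p(v,η) = Φ((l − v·η)/(v·σₒ·√η)). -/
noncomputable def collisionProb (l σₒ v η : ℝ) : ℝ :=
  stdGaussianCDF ((l - v * η) / (v * σₒ * Real.sqrt η))

/- The argument of `Φ` equals `l / (v * σₒ) / √η - σₒ⁻¹ * √η`, which decreases continuously from
`+∞` to `-∞` as `η` runs over `(0, ∞)`, while `Φ` increases continuously from `0` to `1`. Hence
`collisionProb l σₒ v` is strictly decreasing on `(0, ∞)` and takes every value in `(0, 1)`. -/

open ProbabilityTheory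
open scoped Topology

section CDF

variable (μ : Measure ℝ) [IsProbabilityMeasure μ]

theorem strictMono_cdf [μ.IsOpenPosMeasure] : StrictMono (cdf μ) := by
  intro x y hxy
  have measure_Ioc_pos : 0 < μ (Ioc x y) :=
    ((Measure.measure_Ioo_pos μ).mpr hxy).trans_le (measure_mono Ioo_subset_Ioc_self)
  rwa [← measure_cdf μ, StieltjesFunction.measure_Ioc, ENNReal.ofReal_pos, sub_pos]
    at measure_Ioc_pos

theorem continuous_cdf [NullSingletonClass μ] : Continuous (cdf μ) := by
  refine continuous_iff_continuousAt.mpr fun x ↦ ?_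
  have jump_nonpos : cdf μ x - Function.leftLim (cdf μ) x ≤ 0 := by
    rw [← ENNReal.ofReal_eq_zero, ← StieltjesFunction.measure_singleton, measure_cdf,
      measure_singleton]
  rw [(monotone_cdf μ).continuousAt_iff_leftLim_eq_rightLim, StieltjesFunction.rightLim_eq]
  exact le_antisymm ((monotone_cdf μ).leftLim_le le_rfl) (sub_nonpos.mp jump_nonpos)

theorem Ioo_subset_range_cdf [NullSingletonClass μ] : Ioo 0 1 ⊆ range (cdf μ) := by
  rw [← image_univ]
  exact isPreconnected_univ.intermediate_value_Ioo (by simp) (by simp)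
    (continuous_cdf μ).continuousOn (tendsto_cdf_atBot μ) (tendsto_cdf_atTop μ)

end CDF

theorem stdGaussianPDF_eq_gaussianPDFReal : stdGaussianPDF = gaussianPDFReal 0 1 := by
  ext x
  simp [stdGaussianPDF, gaussianPDFReal]

theorem stdGaussianCDF_eq_cdf_gaussianReal : stdGaussianCDF = cdf (gaussianReal 0 1) := by
  ext x
  have integral_pdf_nonneg : 0 ≤ ∫ t in Iic x, gaussianPDFReal 0 1 t :=
    integral_nonneg (gaussianPDFReal_nonneg 0 1)
  rw [cdf_eq_real, measureReal_def, gaussianReal_apply_eq_integral 0 one_ne_zero,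
    ENNReal.toReal_ofReal integral_pdf_nonneg, stdGaussianCDF, stdGaussianPDF_eq_gaussianPDFReal]

theorem strictMono_stdGaussianCDF : StrictMono stdGaussianCDF := by
  have : (gaussianReal 0 1).IsOpenPosMeasure :=
    (gaussianReal_absolutelyContinuous' 0 one_ne_zero).isOpenPosMeasure
  exact stdGaussianCDF_eq_cdf_gaussianReal ▸ strictMono_cdf (gaussianReal 0 1)

theorem Ioo_subset_range_stdGaussianCDF : Ioo 0 1 ⊆ range stdGaussianCDF := by
  have := nullSingletonClass_gaussianReal (μ := 0) one_ne_zero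
  exact stdGaussianCDF_eq_cdf_gaussianReal ▸ Ioo_subset_range_cdf (gaussianReal 0 1)

theorem strictAntiOn_div_sub_mul {K : Type*} [Field K] [LinearOrder K] [IsStrictOrderedRing K]
    {a b : K} (ha : 0 < a) (hb : 0 ≤ b) : StrictAntiOn (fun s ↦ a / s - b * s) (Ioi 0) := by
  intro s hs t _ hst
  have quotient_lt : a / t < a / s := div_lt_div_of_pos_left ha hs hst
  have product_le : b * s ≤ b * t := mul_le_mul_of_nonneg_left hst.le hb
  linarith

theorem surjOn_div_sub_mul {a b : ℝ} (ha : 0 < a) (hb : 0 < b) :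
    SurjOn (fun s ↦ a / s - b * s) (Ioi 0) univ := by
  have continuousOn : ContinuousOn (fun s ↦ a / s - b * s) (Ioi 0) := by
    fun_prop (disch := exact fun s hs ↦ ne_of_gt hs)
  have tendsto_atTop : Tendsto (fun s ↦ a / s - b * s) atTop atBot := by
    simpa only [sub_eq_add_neg, Function.comp_def, id_eq] using
      (tendsto_id.const_div_atTop a).add_atBot
        (tendsto_neg_atTop_atBot.comp (tendsto_id.const_mul_atTop hb))
  have tendsto_zero : Tendsto (fun s ↦ a / s - b * s) (𝓝[>] 0) atTop := by
    have linear_tendsto : Tendsto (fun s ↦ -(b * s)) (𝓝[>] 0) (𝓝 (-(b * 0))) :=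
      (Continuous.tendsto (by fun_prop) 0).mono_left nhdsWithin_le_nhds
    simpa only [div_eq_mul_inv, sub_eq_add_neg] using
      (tendsto_inv_nhdsGT_zero.const_mul_atTop ha).atTop_add linear_tendsto
  exact isPreconnected_Ioi.intermediate_value_Iii (le_principal_iff.mpr (Ioi_mem_atTop 0))
    (l₂ := 𝓝[>] 0) inf_le_right continuousOn tendsto_atTop tendsto_zero

-- For `η ≤ 0` both arguments of `Φ` are `0`, since then `√η = 0` and `x / 0 = 0`.
theorem collisionProb_eq_stdGaussianCDF_div_sqrt_sub (l σₒ : ℝ) {v : ℝ} (hv : v ≠ 0) (η : ℝ) :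
    collisionProb l σₒ v η = stdGaussianCDF (l / (v * σₒ) / √η - σₒ⁻¹ * √η) := by
  rw [collisionProb, sub_div, ← div_div, mul_assoc v, mul_div_mul_left _ _ hv, mul_comm σₒ,
    div_mul_eq_div_div η, Real.div_sqrt, div_eq_inv_mul (√η)]

theorem strictAntiOn_collisionProb {l σₒ v : ℝ} (hl : 0 < l) (hσ : 0 < σₒ) (hv : 0 < v) :
    StrictAntiOn (collisionProb l σₒ v) (Ioi 0) := by
  have argument_strictAntiOn :
      StrictAntiOn (fun η ↦ l / (v * σₒ) / √η - σₒ⁻¹ * √η) (Ioi 0) :=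
    (strictAntiOn_div_sub_mul (by positivity) (by positivity)).comp_strictMonoOn
      (strictMonoOn_sqrt.mono Ioi_subset_Ici_self) fun _ ↦ Real.sqrt_pos.mpr
  exact (strictMono_stdGaussianCDF.comp_strictAntiOn argument_strictAntiOn).congr fun η _ ↦
    (collisionProb_eq_stdGaussianCDF_div_sqrt_sub l σₒ hv.ne' η).symm

theorem surjOn_collisionProb {l σₒ v : ℝ} (hl : 0 < l) (hσ : 0 < σₒ) (hv : 0 < v) :
    SurjOn (collisionProb l σₒ v) (Ioi 0) (Ioo 0 1) := by
  intro p hp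
  obtain ⟨z, rfl⟩ := Ioo_subset_range_stdGaussianCDF hp
  obtain ⟨s, hs : 0 < s, rfl⟩ := surjOn_div_sub_mul (a := l / (v * σₒ)) (b := σₒ⁻¹)
    (by positivity) (by positivity) (mem_univ z)
  refine ⟨s ^ 2, sq_pos_of_pos hs, ?_⟩
  rw [collisionProb_eq_stdGaussianCDF_div_sqrt_sub l σₒ hv.ne', Real.sqrt_sq hs.le]

/-- Lemma 1: for any maximum allowable collision probability pmax ∈ (0,1)
there is a unique headway ηc > 0 with p(v,ηc) = pmax, and for every η > 0,
p(v,η) ≤ pmax if and only if η ≥ ηc. -/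
theorem exists_unique_threshold_headway (l σₒ v pmax : ℝ)
    (hl : 0 < l) (hσ : 0 < σₒ) (hv : 0 < v) (hpmax : pmax ∈ Set.Ioo (0 : ℝ) 1) :
    ∃ ηc > 0, collisionProb l σₒ v ηc = pmax ∧
      (∀ η > 0, collisionProb l σₒ v η ≤ pmax ↔ ηc ≤ η) ∧
      (∀ η' > 0, collisionProb l σₒ v η' = pmax → η' = ηc) := by
  have strictAntiOn := strictAntiOn_collisionProb hl hσ hv
  obtain ⟨ηc, hηc, rfl⟩ := surjOn_collisionProb hl hσ hv hpmax
  exact ⟨ηc, hηc, rfl, fun η hη ↦ strictAntiOn.le_iff_ge hη hηc,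
    fun η' hη' ↦ strictAntiOn.injOn hη' hηc⟩
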